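/- arXiv:2603.02426 — 5 statements merged into one kernel-verified Lean document; each statement's English description precedes it below -/
import Mathlib

section
/- Let d, r, K be positive integers with d ≥ 2r. Let B, B* ∈ ℝ^{d×r} have orthonormal columns and let B*_⊥ ∈ ℝ^{d×(d−r)} be an orthonormal complement of B*. For k = 1,…,K let ω^k, ω^{*,k} ∈ ℝ^r, set z^k := B* ω^{*,k} and x^k := B ω^k − z^k, and let Z ∈ ℝ^{d×K} be the matrix whose k-th column is z^k. Assume the vectors z^1,…,z^K span the column space of B* (equivalently, rank Z = r). Then (1/K) Σ_{k=1}^K ‖x^k‖² ≥ (‖B*_⊥ᵀ B‖² / K) · λ⁺_min(Z Zᵀ), where λ⁺_min(Z Zᵀ) denotes the smallest nonzero eigenvalue of the positive semidefinite matrix Z Zᵀ and ‖B*_⊥ᵀ B‖ is the spectral norm. -/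
open Matrix BigOperators

/-- Spectral norm (largest singular value) of a real matrix, as the operator
norm of the induced linear map between Euclidean spaces. -/
noncomputable def specNorm {m n : ℕ} (A : Matrix (Fin m) (Fin n) ℝ) : ℝ :=
  ‖LinearMap.toContinuousLinearMap (Matrix.toEuclideanLin A)‖

theorem specNorm_sq_le {m n : ℕ} (A : Matrix (Fin m) (Fin n) ℝ) :
    specNorm A ^ 2 ≤ (Aᵀ * A).trace := by
  have htr : (Aᵀ * A).trace = ∑ i, ∑ j, A i j ^ 2 := by
    rw [Finset.sum_comm]
    simp [Matrix.trace, Matrix.mul_apply, sq]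
  have h0 : 0 ≤ ∑ i, ∑ j, A i j ^ 2 := by positivity
  rw [htr]
  have h : specNorm A ≤ Real.sqrt (∑ i, ∑ j, A i j ^ 2) := by
    refine ContinuousLinearMap.opNorm_le_bound _ (Real.sqrt_nonneg _) fun v => ?_
    rw [EuclideanSpace.norm_eq, EuclideanSpace.norm_eq, ← Real.sqrt_mul h0]
    apply Real.sqrt_le_sqrt
    simp only [Real.norm_eq_abs, sq_abs]
    rw [Finset.sum_mul]
    refine Finset.sum_le_sum fun i _ => ?_
    exact Finset.sum_mul_sq_le_sq_mul_sq Finset.univ (fun j => A i j) (fun j => v j)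
  calc specNorm A ^ 2 ≤ Real.sqrt (∑ i, ∑ j, A i j ^ 2) ^ 2 :=
        pow_le_pow_left₀ (norm_nonneg _) h 2
    _ = _ := Real.sq_sqrt h0

theorem trace_transpose_mul_nonneg {m n : ℕ} (A : Matrix (Fin m) (Fin n) ℝ) :
    0 ≤ (Aᵀ * A).trace :=
  le_trans (sq_nonneg _) (specNorm_sq_le A)

/-- Lower bound of local head errors (spectral norm version):
(1/K) Σ_k ‖x^k‖² ≥ (‖B*_⊥ᵀ B‖² / K) · λ⁺_min(Z Zᵀ). -/
theorem local_head_lower_bound_spectral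
    (d r K : ℕ) (hd : 0 < d) (hr : 0 < r) (hK : 0 < K) (hdr : 2 * r ≤ d)
    (B Bstar : Matrix (Fin d) (Fin r) ℝ) (Bperp : Matrix (Fin d) (Fin (d - r)) ℝ)
    (hB : Bᵀ * B = 1) (hBstar : Bstarᵀ * Bstar = 1)
    (hBperp : Bperpᵀ * Bperp = 1) (horth : Bstarᵀ * Bperp = 0)
    (hcomp : Bstar * Bstarᵀ + Bperp * Bperpᵀ = 1)
    (ω ωstar : Fin K → Fin r → ℝ)
    (z x : Fin K → Fin d → ℝ)
    (hz : ∀ k, z k = Bstar.mulVec (ωstar k))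
    (hx : ∀ k, x k = B.mulVec (ω k) - z k)
    (Z : Matrix (Fin d) (Fin K) ℝ) (hZ : ∀ i k, Z i k = z k i)
    (hrank : Z.rank = r)
    -- `lam` is the smallest nonzero eigenvalue of the PSD matrix Z Zᵀ
    (lam : ℝ) (hlam_ne : lam ≠ 0)
    (hlam_eig : Module.End.HasEigenvalue (Matrix.toLin' (Z * Zᵀ)) lam)
    (hlam_min : ∀ μ : ℝ, μ ≠ 0 →
      Module.End.HasEigenvalue (Matrix.toLin' (Z * Zᵀ)) μ → lam ≤ μ) :
    (1 / (K : ℝ)) * ∑ k, (∑ i, (x k i) ^ 2)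
      ≥ (specNorm (Bperpᵀ * B)) ^ 2 / (K : ℝ) * lam := by
  obtain ⟨W, hW⟩ : ∃ W : Matrix (Fin r) (Fin K) ℝ, W = Matrix.of fun j k => ωstar k j := ⟨_, rfl⟩
  obtain ⟨Om, hOm⟩ : ∃ W : Matrix (Fin r) (Fin K) ℝ, W = Matrix.of fun j k => ω k j := ⟨_, rfl⟩
  have hZW : Z = Bstar * W := by
    ext i k
    rw [hZ, hz, hW]; rfl
  -- lam ≥ 0
  have hlam0 : 0 ≤ lam := by
    obtain ⟨v, hv⟩ := hlam_eig.exists_hasEigenvector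
    have h1 : (Z * Zᵀ) *ᵥ v = lam • v := by
      simpa using hv.apply_eq_smul
    have h2 : (Zᵀ *ᵥ v) ⬝ᵥ (Zᵀ *ᵥ v) = lam * (v ⬝ᵥ v) := by
      rw [Matrix.dotProduct_mulVec, Matrix.vecMul_transpose, Matrix.mulVec_mulVec, h1, smul_dotProduct, smul_eq_mul]
    have h3 : 0 < v ⬝ᵥ v := by
      have : 0 ≤ v ⬝ᵥ v := Finset.sum_nonneg fun i _ => mul_self_nonneg _
      exact lt_of_le_of_ne this fun h => hv.2 (dotProduct_self_eq_zero.1 h.symm)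
    have h4 : 0 ≤ (Zᵀ *ᵥ v) ⬝ᵥ (Zᵀ *ᵥ v) := Finset.sum_nonneg fun i _ => mul_self_nonneg _
    rw [h2] at h4
    exact nonneg_of_mul_nonneg_left h4 h3
  have hWr : (W * Wᵀ).rank = r := by
    rw [Matrix.rank_self_mul_transpose]
    refine le_antisymm (by simpa using W.rank_le_height) ?_
    have h := Matrix.rank_mul_le_right Bstar W
    rw [← hZW, hrank] at h
    exact h
  have hinj : ∀ v : Fin r → ℝ, (W * Wᵀ) *ᵥ v = 0 → v = 0 := by
    intro v hv
    have hsurj : Function.Surjective (W * Wᵀ).mulVecLin := by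
      rw [← LinearMap.range_eq_top]
      apply Submodule.eq_top_of_finrank_eq
      rw [Module.finrank_fin_fun]
      exact hWr
    have hi := LinearMap.injective_iff_surjective.2 hsurj
    exact hi (by rw [map_zero]; exact hv)
  have hS : (W * Wᵀ - lam • (1 : Matrix (Fin r) (Fin r) ℝ)).IsHermitian := by
    simp [Matrix.IsHermitian, Matrix.conjTranspose_eq_transpose_of_trivial, Matrix.transpose_mul]
  have hPSD : (W * Wᵀ - lam • (1 : Matrix (Fin r) (Fin r) ℝ)).PosSemidef := by
    rw [hS.posSemidef_iff_eigenvalues_nonneg]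
    intro i
    have he := hS.mulVec_eigenvectorBasis i
    set v : Fin r → ℝ := (hS.eigenvectorBasis i).ofLp with hvdef
    have hv0 : v ≠ 0 := by
      intro h
      have := hS.eigenvectorBasis.orthonormal.ne_zero i
      exact this (by ext j; exact congrFun h j)
    have he2 : (W * Wᵀ) *ᵥ v = (hS.eigenvalues i + lam) • v := by
      rw [Matrix.sub_mulVec, Matrix.smul_mulVec, Matrix.one_mulVec] at he
      rw [add_smul, ← he]; simp
    have hne : hS.eigenvalues i + lam ≠ 0 := by
      intro h
      rw [h, zero_smul] at he2
      exact hv0 (hinj v he2)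
    have hle := hlam_min _ hne (Module.End.hasEigenvalue_of_hasEigenvector (x := Bstar *ᵥ v) ⟨?_, ?_⟩)
    · simpa using hle
    · rw [Module.End.mem_eigenspace_iff, Matrix.toLin'_apply, Matrix.mulVec_mulVec, hZW,
        Matrix.transpose_mul, Matrix.mul_assoc, Matrix.mul_assoc, Matrix.mul_assoc, hBstar,
        Matrix.mul_one, ← Matrix.mulVec_mulVec, he2, Matrix.mulVec_smul]
    · intro h
      have : Bstarᵀ *ᵥ (Bstar *ᵥ v) = 0 := by rw [h, Matrix.mulVec_zero]
      rw [Matrix.mulVec_mulVec, hBstar, Matrix.one_mulVec] at this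
      exact hv0 this
  -- sum of squares as a trace
  set X : Matrix (Fin d) (Fin K) ℝ := B * Om - Bstar * W with hXdef
  have hsum : ∑ k, (∑ i, (x k i) ^ 2) = (Xᵀ * X).trace := by
    have hXx : ∀ i k, X i k = x k i := by
      intro i k
      rw [hx, ← hZW] at *
      simp only [hXdef, Matrix.sub_apply, Pi.sub_apply, hZ, hOm]; rfl
    simp [Matrix.trace, Matrix.mul_apply, sq, hXx]
  set P : Matrix (Fin d) (Fin d) ℝ := 1 - B * Bᵀ with hP
  have hPT : Pᵀ = P := by simp [hP]
  have hPB : P * B = 0 := by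
    rw [hP, Matrix.sub_mul, Matrix.mul_assoc, hB]; simp
  have hPP : P * P = P := by
    nth_rewrite 2 [hP]
    rw [Matrix.mul_sub, ← Matrix.mul_assoc, hPB]; simp
  set N := P * Bstar with hN
  have hPX : P * X = -(N * W) := by
    rw [hXdef, Matrix.mul_sub, ← Matrix.mul_assoc, hPB, hN, Matrix.mul_assoc]; simp
  have h1 : (Xᵀ * X).trace = ((N * W)ᵀ * (N * W)).trace + ((Bᵀ * X)ᵀ * (Bᵀ * X)).trace := by
    have : (N * W)ᵀ * (N * W) = Xᵀ * P * X := by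
      have e : (N * W)ᵀ * (N * W) = (P * X)ᵀ * (P * X) := by rw [hPX]; simp
      rw [e, Matrix.transpose_mul, hPT, Matrix.mul_assoc, ← Matrix.mul_assoc P, hPP,
        Matrix.mul_assoc]
    rw [this, ← Matrix.trace_add, hP]
    congr 1
    simp only [Matrix.transpose_mul, Matrix.transpose_transpose, Matrix.mul_sub, Matrix.sub_mul,
      Matrix.mul_one, Matrix.mul_assoc]
    abel
  have h2 : ((N * W)ᵀ * (N * W)).trace =
      (N * (W * Wᵀ - lam • (1 : Matrix (Fin r) (Fin r) ℝ)) * Nᵀ).trace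
        + lam * (Nᵀ * N).trace := by
    rw [Matrix.trace_mul_comm, Matrix.trace_mul_comm Nᵀ N, Matrix.mul_sub, Matrix.sub_mul,
      Matrix.trace_sub]
    simp [Matrix.transpose_mul, Matrix.mul_assoc]
  have h3 : 0 ≤ (N * (W * Wᵀ - lam • (1 : Matrix (Fin r) (Fin r) ℝ)) * Nᵀ).trace := by
    have := (hPSD.mul_mul_conjTranspose_same N).trace_nonneg
    rwa [Matrix.conjTranspose_eq_transpose_of_trivial] at this
  have h4 : (Nᵀ * N).trace = ((Bperpᵀ * B)ᵀ * (Bperpᵀ * B)).trace := by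
    have e1 : Nᵀ * N = 1 - Bstarᵀ * B * (Bᵀ * Bstar) := by
      rw [hN, Matrix.transpose_mul, hPT, Matrix.mul_assoc, ← Matrix.mul_assoc P, hPP, hP,
        Matrix.sub_mul, Matrix.mul_sub, Matrix.one_mul, hBstar]
      simp only [Matrix.mul_assoc]
    have e2 : (Bperpᵀ * B)ᵀ * (Bperpᵀ * B) = 1 - Bᵀ * Bstar * (Bstarᵀ * B) := by
      have : Bperp * Bperpᵀ = 1 - Bstar * Bstarᵀ := by rw [← hcomp]; abel
      rw [Matrix.transpose_mul, Matrix.transpose_transpose, Matrix.mul_assoc,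
        ← Matrix.mul_assoc Bperp, this, Matrix.sub_mul, Matrix.mul_sub, Matrix.one_mul, hB]
      simp only [Matrix.mul_assoc]
    rw [e1, e2, Matrix.trace_sub, Matrix.trace_sub, Matrix.trace_mul_comm (Bstarᵀ * B)]
  have h5 := specNorm_sq_le (Bperpᵀ * B)
  have h6 := trace_transpose_mul_nonneg (Bᵀ * X)
  have h7 := mul_le_mul_of_nonneg_left h5 hlam0
  rw [← h4] at h7
  have hfin : specNorm (Bperpᵀ * B) ^ 2 * lam ≤ ∑ k, (∑ i, (x k i) ^ 2) := by
    rw [hsum, h1, h2]; linarith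
  have hK' : (0 : ℝ) < K := by exact_mod_cast hK
  rw [ge_iff_le, div_mul_eq_mul_div, one_div, inv_mul_eq_div]
  exact div_le_div_of_nonneg_right hfin hK'.le
end

section
/- Let B ∈ ℝ^{d×r} satisfy BᵀB = I_r, let Q ∈ ℝ^{d×r} satisfy BᵀQ = 0 and ‖Q‖_F² < 1/4, and let R ∈ ℝ^{r×r} be an upper triangular matrix with positive diagonal entries satisfying RᵀR = I_r + QᵀQ (i.e., R is the R-factor of the QR decomposition of B + Q). Then ‖R − I_r‖_F ≤ 2‖Q‖_F². -/
open Matrix BigOperators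

/-- Frobenius norm of a real matrix. -/
noncomputable def frobNorm {m n : ℕ} (A : Matrix (Fin m) (Fin n) ℝ) : ℝ :=
  Real.sqrt (∑ i, ∑ j, (A i j) ^ 2)

attribute [local instance] Matrix.frobeniusNormedAddCommGroup

theorem frobNorm_eq_norm {m n : ℕ} (A : Matrix (Fin m) (Fin n) ℝ) : frobNorm A = ‖A‖ := by
  rw [Matrix.frobenius_norm_def, frobNorm, Real.sqrt_eq_rpow]
  simp

theorem frobNorm_sq {m n : ℕ} (A : Matrix (Fin m) (Fin n) ℝ) :
    frobNorm A ^ 2 = ∑ i, ∑ j, (A i j) ^ 2 :=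
  Real.sq_sqrt (Finset.sum_nonneg fun _ _ => Finset.sum_nonneg fun _ _ => sq_nonneg _)

theorem frobNorm_sq_trace {m n : ℕ} (A : Matrix (Fin m) (Fin n) ℝ) :
    frobNorm A ^ 2 = (Aᵀ * A).trace := by
  rw [frobNorm_sq, Finset.sum_comm]
  simp [Matrix.trace, Matrix.mul_apply, sq]

theorem one_le_diag {d r : ℕ} (Q : Matrix (Fin d) (Fin r) ℝ)
    (R : Matrix (Fin r) (Fin r) ℝ)
    (hRtri : R.BlockTriangular id)
    (hRdiag : ∀ i, 0 < R i i)
    (hR : Rᵀ * R = 1 + Qᵀ * Q) (i : Fin r) : 1 ≤ R i i := by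
  have hdet : IsUnit R.det := by
    rw [Matrix.det_of_upperTriangular hRtri]
    exact (Finset.prod_pos fun i _ => hRdiag i).ne'.isUnit
  letI := Matrix.invertibleOfIsUnitDet R hdet
  have hinv : R⁻¹.BlockTriangular id := Matrix.blockTriangular_inv_of_blockTriangular hRtri
  have hmul : R * R⁻¹ = 1 := Matrix.mul_nonsing_inv R hdet
  have h1 : R i i * R⁻¹ i i = 1 := by
    have h := congrFun (congrFun hmul i) i
    rw [Matrix.mul_apply, Finset.sum_eq_single i] at h
    · simpa using h
    · intro k _ hk
      rcases lt_or_gt_of_ne hk with h' | h'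
      · rw [hRtri (show id k < id i from h'), zero_mul]
      · rw [hinv (show id i < id k from h'), mul_zero]
    · simp
  have h2 : (R⁻¹)ᵀ * R⁻¹ + (Q * R⁻¹)ᵀ * (Q * R⁻¹) = 1 := by
    calc _ = (R⁻¹)ᵀ * (1 + Qᵀ * Q) * R⁻¹ := by
            simp only [Matrix.transpose_mul, Matrix.mul_add, Matrix.add_mul, Matrix.mul_assoc,
              Matrix.mul_one]
      _ = (R * R⁻¹)ᵀ * (R * R⁻¹) := by
            rw [← hR]; simp only [Matrix.transpose_mul, Matrix.mul_assoc]
      _ = 1 := by rw [hmul]; simp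
  have h3 := congrFun (congrFun h2 i) i
  simp only [Matrix.add_apply, Matrix.mul_apply (M := (R⁻¹)ᵀ),
    Matrix.mul_apply (M := (Q * R⁻¹)ᵀ), Matrix.transpose_apply, Matrix.one_apply_eq] at h3
  have h4 : R⁻¹ i i * R⁻¹ i i ≤ ∑ k, R⁻¹ k i * R⁻¹ k i :=
    Finset.single_le_sum (f := fun k => R⁻¹ k i * R⁻¹ k i)
      (fun k _ => mul_self_nonneg _) (Finset.mem_univ i)
  have h5 : 0 ≤ ∑ k, (Q * R⁻¹) k i * (Q * R⁻¹) k i :=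
    Finset.sum_nonneg fun k _ => mul_self_nonneg _
  have h6 := hRdiag i
  have h7 : R⁻¹ i i ≤ 1 := by nlinarith
  nlinarith

/-- Perturbation of the QR decomposition, first conclusion:
the R-factor of B + Q satisfies ‖R − I‖_F ≤ 2‖Q‖_F². -/
theorem qr_perturbation_R_sub_one
    (d r : ℕ)
    (B Q : Matrix (Fin d) (Fin r) ℝ)
    (hB : Bᵀ * B = 1) (hBQ : Bᵀ * Q = 0)
    (hQ : frobNorm Q ^ 2 < 1 / 4)
    (R : Matrix (Fin r) (Fin r) ℝ)
    (hRtri : R.BlockTriangular id)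
    (hRdiag : ∀ i, 0 < R i i)
    (hR : Rᵀ * R = 1 + Qᵀ * Q) :
    frobNorm (R - 1) ≤ 2 * frobNorm Q ^ 2 := by
  have hd := one_le_diag Q R hRtri hRdiag hR
  have htr : (r : ℝ) ≤ R.trace := by
    have := Finset.sum_le_sum (s := Finset.univ) (fun i _ => hd i)
    simpa [Matrix.trace] using this
  have hexp : (R - 1)ᵀ * (R - 1) = Rᵀ * R - R - Rᵀ + 1 := by
    simp only [Matrix.transpose_sub, Matrix.transpose_one]; noncomm_ring
  -- a priori bound
  have h1 : frobNorm (R - 1) ^ 2 ≤ frobNorm Q ^ 2 := by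
    rw [frobNorm_sq_trace, frobNorm_sq_trace, hexp, hR]
    simp only [Matrix.trace_add, Matrix.trace_sub, Matrix.trace_transpose, Matrix.trace_one,
      Fintype.card_fin]
    linarith
  have h2 : (R - 1) + (R - 1)ᵀ = Qᵀ * Q - (R - 1)ᵀ * (R - 1) := by
    rw [hexp, hR]; simp only [Matrix.transpose_sub, Matrix.transpose_one]; abel
  have h3 : frobNorm ((R - 1) + (R - 1)ᵀ) ≤ frobNorm Q ^ 2 + frobNorm (R - 1) ^ 2 := by
    rw [h2]
    simp only [frobNorm_eq_norm]
    refine (norm_sub_le _ _).trans (add_le_add ?_ ?_)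
    · refine (Matrix.frobenius_norm_mul _ _).trans ?_
      rw [Matrix.frobenius_norm_transpose, sq]
    · refine (Matrix.frobenius_norm_mul _ _).trans ?_
      rw [Matrix.frobenius_norm_transpose, sq]
  have h4 : 2 * frobNorm (R - 1) ^ 2 ≤ frobNorm ((R - 1) + (R - 1)ᵀ) ^ 2 := by
    have hE : ∀ i j, 0 ≤ (R - 1) i j * (R - 1) j i := by
      intro i j
      rcases lt_trichotomy i j with h | h | h
      · simp [Matrix.sub_apply, hRtri (show id i < id j from h), Matrix.one_apply_ne h.ne']
      · subst h; exact mul_self_nonneg _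
      · simp [Matrix.sub_apply, hRtri (show id j < id i from h), Matrix.one_apply_ne h.ne']
    have hs : frobNorm (R - 1) ^ 2 = ∑ i, ∑ j, ((R - 1) j i) ^ 2 := by
      rw [frobNorm_sq, Finset.sum_comm]
    rw [two_mul]
    nth_rewrite 2 [hs]
    rw [frobNorm_sq, frobNorm_sq, ← Finset.sum_add_distrib]
    refine Finset.sum_le_sum fun i _ => ?_
    rw [← Finset.sum_add_distrib]
    refine Finset.sum_le_sum fun j _ => ?_
    have := hE i j
    rw [Matrix.add_apply, Matrix.transpose_apply]
    nlinarith
  have h5 : 0 ≤ frobNorm ((R - 1) + (R - 1)ᵀ) := Real.sqrt_nonneg _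
  have h6 : frobNorm ((R - 1) + (R - 1)ᵀ) ≤ 2 * frobNorm Q ^ 2 := by linarith
  have h7 : frobNorm ((R - 1) + (R - 1)ᵀ) ^ 2 ≤ (2 * frobNorm Q ^ 2) ^ 2 :=
    pow_le_pow_left₀ h5 h6 2
  refine abs_le_of_sq_le_sq' ?_ (by positivity) |>.2
  nlinarith [sq_nonneg (frobNorm (R - 1))]
end

section
/- Let B ∈ ℝ^{d×r} satisfy BᵀB = I_r, let Q ∈ ℝ^{d×r} satisfy BᵀQ = 0 and ‖Q‖_F² < 1/4, and let R ∈ ℝ^{r×r} be an upper triangular matrix with positive diagonal entries satisfying RᵀR = I_r + QᵀQ. Then R is invertible, ‖R^{−1}‖ ≤ 1/(1 − 2‖Q‖_F²), and ‖R^{−1} − I_r‖ ≤ 4‖Q‖_F², where ‖·‖ denotes the spectral norm. -/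
open Matrix BigOperators

lemma aux_spec_le {m n : ℕ} (A : Matrix (Fin m) (Fin n) ℝ) (c : ℝ) (hc : 0 ≤ c)
    (h : ∀ x : Fin n → ℝ, (A *ᵥ x) ⬝ᵥ (A *ᵥ x) ≤ c ^ 2 * (x ⬝ᵥ x)) : specNorm A ≤ c := by
  unfold specNorm
  refine ContinuousLinearMap.opNorm_le_bound _ hc fun x => ?_
  refine le_of_sq_le_sq ?_ (by positivity)
  rw [mul_pow, EuclideanSpace.norm_sq_eq, EuclideanSpace.norm_sq_eq]
  have := h x.ofLp
  simp only [dotProduct] at this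
  simpa [Matrix.toEuclideanLin, Matrix.toLpLin_apply, sq] using this

lemma aux_dot_nonneg {n : ℕ} (x : Fin n → ℝ) : 0 ≤ x ⬝ᵥ x :=
  Finset.sum_nonneg fun i _ => mul_self_nonneg _

lemma aux_mulVec_F {m n : ℕ} (A : Matrix (Fin m) (Fin n) ℝ) (x : Fin n → ℝ) :
    (A *ᵥ x) ⬝ᵥ (A *ᵥ x) ≤ (∑ i, ∑ j, (A i j) ^ 2) * (x ⬝ᵥ x) := by
  rw [Finset.sum_mul]
  simp only [dotProduct, mulVec, ← sq]
  exact Finset.sum_le_sum fun i _ => Finset.sum_mul_sq_le_sq_mul_sq _ _ _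

lemma aux_F_gram {m n : ℕ} (Q : Matrix (Fin m) (Fin n) ℝ) :
    (∑ i, ∑ j, ((Qᵀ * Q) i j) ^ 2) ≤ (∑ i, ∑ j, (Q i j) ^ 2) ^ 2 := by
  rw [Finset.sum_comm (f := fun i j => (Q i j) ^ 2), sq, Finset.sum_mul_sum]
  refine Finset.sum_le_sum fun i _ => Finset.sum_le_sum fun j _ => ?_
  simp only [Matrix.mul_apply, Matrix.transpose_apply]
  exact Finset.sum_mul_sq_le_sq_mul_sq _ _ _

lemma aux_transpose {n : ℕ} (S : Matrix (Fin n) (Fin n) ℝ)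
    (h : ∀ x : Fin n → ℝ, (S *ᵥ x) ⬝ᵥ (S *ᵥ x) ≤ x ⬝ᵥ x) (x : Fin n → ℝ) :
    (Sᵀ *ᵥ x) ⬝ᵥ (Sᵀ *ᵥ x) ≤ x ⬝ᵥ x := by
  have h1 := h (Sᵀ *ᵥ x)
  have h2 := aux_dot_nonneg (x - S *ᵥ (Sᵀ *ᵥ x))
  have h3 : x ⬝ᵥ (S *ᵥ (Sᵀ *ᵥ x)) = (Sᵀ *ᵥ x) ⬝ᵥ (Sᵀ *ᵥ x) := by
    rw [Matrix.dotProduct_mulVec, ← Matrix.mulVec_transpose]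
  rw [sub_dotProduct, dotProduct_sub, dotProduct_sub,
    dotProduct_comm (S *ᵥ (Sᵀ *ᵥ x)) x, h3] at h2
  linarith

lemma aux_F_contr {n : ℕ} (T G : Matrix (Fin n) (Fin n) ℝ)
    (h : ∀ x : Fin n → ℝ, (T *ᵥ x) ⬝ᵥ (T *ᵥ x) ≤ x ⬝ᵥ x) :
    (∑ i, ∑ j, ((T * G) i j) ^ 2) ≤ ∑ i, ∑ j, (G i j) ^ 2 := by
  rw [Finset.sum_comm, Finset.sum_comm (f := fun i j => (G i j) ^ 2)]
  refine Finset.sum_le_sum fun j _ => ?_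
  have := h (fun i => G i j)
  simpa only [dotProduct, mulVec, ← sq, Matrix.mul_apply] using this

/-- Perturbation of the QR decomposition, second and third conclusions:
R is invertible, ‖R⁻¹‖ ≤ 1/(1 − 2‖Q‖_F²), and ‖R⁻¹ − I‖ ≤ 4‖Q‖_F². -/
theorem qr_perturbation_R_inv
    (d r : ℕ)
    (B Q : Matrix (Fin d) (Fin r) ℝ)
    (hB : Bᵀ * B = 1) (hBQ : Bᵀ * Q = 0)
    (hQ : frobNorm Q ^ 2 < 1 / 4)
    (R : Matrix (Fin r) (Fin r) ℝ)
    (hRtri : R.BlockTriangular id)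
    (hRdiag : ∀ i, 0 < R i i)
    (hR : Rᵀ * R = 1 + Qᵀ * Q) :
    IsUnit R.det
      ∧ specNorm R⁻¹ ≤ 1 / (1 - 2 * frobNorm Q ^ 2)
      ∧ specNorm (R⁻¹ - 1) ≤ 4 * frobNorm Q ^ 2 := by
  have hF : frobNorm Q ^ 2 = ∑ i, ∑ j, (Q i j) ^ 2 :=
    Real.sq_sqrt (Finset.sum_nonneg fun i _ => Finset.sum_nonneg fun j _ => sq_nonneg _)
  have hq0 : 0 ≤ frobNorm Q ^ 2 := sq_nonneg _
  have hdet : IsUnit R.det := by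
    rw [Matrix.det_of_upperTriangular hRtri]
    exact (Finset.prod_pos fun i _ => hRdiag i).ne'.isUnit
  have hRS : R * R⁻¹ = 1 := Matrix.mul_nonsing_inv R hdet
  have hSR : R⁻¹ * R = 1 := Matrix.nonsing_inv_mul R hdet
  have hStri : (R⁻¹).BlockTriangular id := by
    haveI := Matrix.invertibleOfIsUnitDet R hdet
    exact Matrix.blockTriangular_inv_of_blockTriangular hRtri
  generalize R⁻¹ = S at *
  have hS : ∀ x : Fin r → ℝ, (S *ᵥ x) ⬝ᵥ (S *ᵥ x) ≤ x ⬝ᵥ x := by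
    intro x
    obtain ⟨y, rfl⟩ : ∃ y, x = R *ᵥ y := ⟨S *ᵥ x, by simp [hRS]⟩
    have h1 : (R *ᵥ y) ⬝ᵥ (R *ᵥ y) = y ⬝ᵥ y + (Q *ᵥ y) ⬝ᵥ (Q *ᵥ y) := by
      rw [Matrix.dotProduct_mulVec, ← Matrix.mulVec_transpose, Matrix.mulVec_mulVec, hR,
        Matrix.add_mulVec, add_dotProduct, Matrix.one_mulVec, Matrix.dotProduct_mulVec (Q *ᵥ y),
        ← Matrix.mulVec_transpose, Matrix.mulVec_mulVec]
    rw [Matrix.mulVec_mulVec, hSR, Matrix.one_mulVec, h1]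
    linarith [aux_dot_nonneg (Q *ᵥ y)]
  have hkey : R - Sᵀ = Sᵀ * (Qᵀ * Q) := by
    have h1 : Sᵀ * Rᵀ = 1 := by rw [← Matrix.transpose_mul, hRS, Matrix.transpose_one]
    have h2 : Sᵀ * (Rᵀ * R) = R := by rw [← Matrix.mul_assoc, h1, Matrix.one_mul]
    rw [hR, Matrix.mul_add, Matrix.mul_one] at h2
    exact sub_eq_of_eq_add' h2.symm
  have hdiag : ∀ i, S i i * R i i = 1 := by
    intro i
    have h1 := congrFun (congrFun hSR i) i
    rw [Matrix.mul_apply, Finset.sum_eq_single i] at h1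
    · simpa using h1
    · intro k _ hk
      rcases lt_or_gt_of_ne hk with h | h
      · rw [hStri (show id k < id i from h), zero_mul]
      · rw [hRtri (show id i < id k from h), mul_zero]
    · simp
  have hE : (∑ i, ∑ j, ((1 - R) i j) ^ 2) ≤ (frobNorm Q ^ 2) ^ 2 := by
    refine le_trans ?_ ((aux_F_contr Sᵀ (Qᵀ * Q) (aux_transpose S hS)).trans
      ((aux_F_gram Q).trans_eq (by rw [hF])))
    rw [← hkey]
    refine Finset.sum_le_sum fun i _ => Finset.sum_le_sum fun j _ => ?_
    simp only [Matrix.sub_apply, Matrix.transpose_apply]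
    rcases lt_trichotomy i j with h | h | h
    · rw [hStri (show id i < id j from h), Matrix.one_apply_ne h.ne]
      simp
    · subst h
      rw [Matrix.one_apply_eq]
      have h1 := hdiag i
      have h2 := hRdiag i
      have h3 : 0 < S i i := by
        by_contra hn
        nlinarith
      have h4 : R i i - S i i = (R i i - 1) * (1 + S i i) := by linear_combination -h1
      rw [h4, mul_pow]
      have h5 : 1 ≤ (1 + S i i) ^ 2 := by nlinarith
      have h6 := mul_le_mul_of_nonneg_left h5 (sq_nonneg (R i i - 1))
      linarith [sub_sq_comm (R i i) 1]
    · rw [hRtri (show id j < id i from h), Matrix.one_apply_ne h.ne']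
      simpa using sq_nonneg (S j i)
  refine ⟨hdet, ?_, ?_⟩
  · have h1 : specNorm S ≤ 1 := aux_spec_le S 1 zero_le_one (by simpa using hS)
    refine h1.trans ?_
    rw [le_div_iff₀ (by linarith)]
    linarith
  · have h1 : specNorm (S - 1) ≤ frobNorm Q ^ 2 := by
      refine aux_spec_le _ _ hq0 fun x => ?_
      have h2 : S - 1 = S * (1 - R) := by rw [Matrix.mul_sub, hSR, Matrix.mul_one]
      rw [h2, ← Matrix.mulVec_mulVec]
      exact (hS _).trans ((aux_mulVec_F _ _).trans
        (mul_le_mul_of_nonneg_right hE (aux_dot_nonneg x)))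
    linarith
end

section
/- Let B, B* ∈ ℝ^{d×r} have orthonormal columns and let B*_⊥ ∈ ℝ^{d×(d−r)} be an orthonormal complement of B*. Let U_ω ≥ 0 and let ω, ω* ∈ ℝ^r satisfy ‖ω‖ ≤ U_ω and ‖ω*‖ ≤ U_ω; set x := B ω − B* ω*. Let A ∈ ℝ^{d×d} satisfy ‖A‖ ≤ 2 and sᵀ A s ≤ −c‖s‖² for all s ∈ ℝ^d, where c > 0. Then ⟨x, B Bᵀ A x⟩ ≤ −c‖x‖² + 4 U_ω ‖B Bᵀ − B* B*ᵀ‖ ‖x‖ + 2 U_ω ‖B*_⊥ᵀ B‖ ‖x‖, where ‖·‖ denotes the spectral norm for matrices and the Euclidean norm for vectors. -/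
open Matrix BigOperators

/-- Euclidean norm of a vector in ℝ^n. -/
noncomputable def euclNorm {n : ℕ} (v : Fin n → ℝ) : ℝ :=
  Real.sqrt (∑ i, (v i) ^ 2)

theorem euclNorm_eq_aux {n : ℕ} (v : Fin n → ℝ) : euclNorm v = ‖WithLp.toLp 2 v‖ := by
  simp [euclNorm, EuclideanSpace.norm_eq]

theorem euclNorm_nonneg_aux {n : ℕ} (v : Fin n → ℝ) : 0 ≤ euclNorm v := Real.sqrt_nonneg _

theorem euclNorm_mulVec_aux {m n : ℕ} (M : Matrix (Fin m) (Fin n) ℝ) (v : Fin n → ℝ) :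
    euclNorm (M.mulVec v) ≤ specNorm M * euclNorm v := by
  rw [euclNorm_eq_aux, euclNorm_eq_aux]
  exact (LinearMap.toContinuousLinearMap (Matrix.toEuclideanLin M)).le_opNorm (WithLp.toLp 2 v)

theorem dot_self_aux {n : ℕ} (v : Fin n → ℝ) : euclNorm v = Real.sqrt (v ⬝ᵥ v) := by
  simp [euclNorm, dotProduct, sq]

theorem dot_le_aux {n : ℕ} (v w : Fin n → ℝ) : -(v ⬝ᵥ w) ≤ euclNorm v * euclNorm w := by
  rw [euclNorm_eq_aux, euclNorm_eq_aux]
  have h := abs_real_inner_le_norm (WithLp.toLp 2 v) (WithLp.toLp 2 w)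
  have e : inner ℝ (WithLp.toLp 2 v) (WithLp.toLp 2 w) = v ⬝ᵥ w := by
    simp [PiLp.inner_apply, dotProduct, mul_comm]
  rw [e] at h
  exact (neg_le_abs _).trans h

theorem euclNorm_iso_aux {d r : ℕ} (B : Matrix (Fin d) (Fin r) ℝ) (hB : Bᵀ * B = 1)
    (v : Fin r → ℝ) : euclNorm (B.mulVec v) = euclNorm v := by
  rw [dot_self_aux, dot_self_aux, Matrix.dotProduct_mulVec, Matrix.vecMul_mulVec, hB,
    Matrix.vecMul_one]

/-- Negative-drift bound for the local head error under heterogeneity: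
⟨x, BBᵀAx⟩ ≤ −c‖x‖² + 4U_ω‖BBᵀ−B*B*ᵀ‖‖x‖ + 2U_ω‖B*_⊥ᵀB‖‖x‖. -/
theorem negative_drift_bound
    (d r : ℕ)
    (B Bstar : Matrix (Fin d) (Fin r) ℝ)
    (Bperp : Matrix (Fin d) (Fin (d - r)) ℝ)
    (hB : Bᵀ * B = 1) (hBstar : Bstarᵀ * Bstar = 1)
    (hBperp : Bperpᵀ * Bperp = 1) (horth : Bstarᵀ * Bperp = 0)
    (hcomp : Bstar * Bstarᵀ + Bperp * Bperpᵀ = 1)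
    (Uω : ℝ) (hUω : 0 ≤ Uω)
    (ω ωstar : Fin r → ℝ) (hω : euclNorm ω ≤ Uω) (hωstar : euclNorm ωstar ≤ Uω)
    (x : Fin d → ℝ) (hx : x = B.mulVec ω - Bstar.mulVec ωstar)
    (A : Matrix (Fin d) (Fin d) ℝ) (hAnorm : specNorm A ≤ 2)
    (c : ℝ) (hc : 0 < c)
    (hAneg : ∀ s : Fin d → ℝ, s ⬝ᵥ A.mulVec s ≤ -c * (euclNorm s) ^ 2) :
    x ⬝ᵥ (B * Bᵀ * A).mulVec x
      ≤ -c * (euclNorm x) ^ 2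
        + 4 * Uω * specNorm (B * Bᵀ - Bstar * Bstarᵀ) * euclNorm x
        + 2 * Uω * specNorm (Bperpᵀ * B) * euclNorm x := by
  have hn := euclNorm_nonneg_aux x
  have hP := norm_nonneg (LinearMap.toContinuousLinearMap
    (Matrix.toEuclideanLin (B * Bᵀ - Bstar * Bstarᵀ)))
  have hQ := norm_nonneg (LinearMap.toContinuousLinearMap (Matrix.toEuclideanLin (Bperpᵀ * B)))
  change 0 ≤ specNorm (B * Bᵀ - Bstar * Bstarᵀ) at hP
  change 0 ≤ specNorm (Bperpᵀ * B) at hQ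
  obtain ⟨y, hy⟩ : ∃ y, y = (Bstar * Bstarᵀ - B * Bᵀ).mulVec (Bstar.mulVec ωstar) := ⟨_, rfl⟩
  have hy' : y = (B * Bᵀ - Bstar * Bstarᵀ).mulVec (Bstar.mulVec (-ωstar)) := by
    rw [hy, ← neg_sub (B * Bᵀ), Matrix.neg_mulVec, Matrix.mulVec_neg, Matrix.mulVec_neg]
  have hyn : euclNorm y ≤ specNorm (B * Bᵀ - Bstar * Bstarᵀ) * Uω := by
    rw [hy']
    refine (euclNorm_mulVec_aux _ _).trans (mul_le_mul_of_nonneg_left ?_ hP)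
    rw [euclNorm_iso_aux _ hBstar]
    simpa [euclNorm] using hωstar
  have hPx : (B * Bᵀ).mulVec x = x + y := by
    have h1 : B * Bᵀ * B = B := by rw [Matrix.mul_assoc, hB, Matrix.mul_one]
    have h2 : Bstar * Bstarᵀ * Bstar = Bstar := by
      rw [Matrix.mul_assoc, hBstar, Matrix.mul_one]
    rw [hy, hx, Matrix.mulVec_sub, Matrix.sub_mulVec, Matrix.mulVec_mulVec,
      Matrix.mulVec_mulVec, Matrix.mulVec_mulVec, h1, h2]
    abel
  have key : x ⬝ᵥ (B * Bᵀ * A).mulVec x = x ⬝ᵥ A.mulVec x + y ⬝ᵥ A.mulVec x := by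
    rw [← Matrix.mulVec_mulVec, Matrix.dotProduct_mulVec, ← Matrix.mulVec_transpose,
      Matrix.transpose_mul, Matrix.transpose_transpose, hPx, add_dotProduct]
  have hd := dot_le_aux (-y) (A.mulVec x)
  have hny : euclNorm (-y) = euclNorm y := by simp [euclNorm]
  rw [neg_dotProduct, neg_neg, hny] at hd
  have hAx : euclNorm (A.mulVec x) ≤ 2 * euclNorm x :=
    (euclNorm_mulVec_aux A x).trans (mul_le_mul_of_nonneg_right hAnorm hn)
  have h3 : euclNorm y * euclNorm (A.mulVec x)
      ≤ (specNorm (B * Bᵀ - Bstar * Bstarᵀ) * Uω) * (2 * euclNorm x) :=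
    mul_le_mul hyn hAx (euclNorm_nonneg_aux _) (mul_nonneg hP hUω)
  have h4 := mul_nonneg (mul_nonneg hUω hP) hn
  have h5 := mul_nonneg (mul_nonneg hUω hQ) hn
  have h6 := hAneg x
  rw [key]
  linarith
end

section
/- Let (Ω, F, P) be a probability space with a filtration (G_ℓ)_{ℓ=0}^{L−1}, L ≥ 1, and let X_0, …, X_{L−1} be ℝ^d-valued random vectors such that X_ℓ is G_ℓ-measurable and ‖X_ℓ‖ ≤ U almost surely for each ℓ, where U ≥ 0. Let m > 0 and ρ ∈ (0,1), and suppose that for all 0 ≤ ℓ < ℓ' ≤ L−1, ‖E[X_{ℓ'} | G_ℓ]‖ ≤ U m ρ^{ℓ'−ℓ} almost surely. Then E‖Σ_{ℓ=0}^{L−1} X_ℓ‖² ≤ U² (1 + 2mρ/(1−ρ)) L, and E‖Σ_{ℓ=0}^{L−1} X_ℓ‖ ≤ (U + U√(2mρ/(1−ρ))) √L. -/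
open MeasureTheory BigOperators

lemma lnr_geom (ρ : ℝ) (h0 : 0 < ρ) (h1 : ρ < 1) (n : ℕ) :
    ∑ l ∈ Finset.range n, ρ ^ (n - l) ≤ ρ / (1 - ρ) := by
  have h2 : 0 < 1 - ρ := by linarith
  induction n with
  | zero => simp; positivity
  | succ n ih =>
    have e : ∑ l ∈ Finset.range n, ρ ^ (n + 1 - l) = ρ * ∑ l ∈ Finset.range n, ρ ^ (n - l) := by
      rw [Finset.mul_sum]
      refine Finset.sum_congr rfl fun l hl => ?_
      have := Finset.mem_range.mp hl
      rw [show n + 1 - l = (n - l) + 1 by omega, pow_succ]; ring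
    rw [Finset.sum_range_succ, e]
    have : ρ / (1 - ρ) = ρ * (ρ / (1 - ρ)) + ρ := by field_simp; ring
    rw [this]
    have := mul_le_mul_of_nonneg_left ih h0.le
    simpa using this

lemma lnr_cov {Ω : Type*} {m0 mΩ : MeasurableSpace Ω} (P : Measure Ω) [IsProbabilityMeasure P]
    {E : Type*} [NormedAddCommGroup E] [InnerProductSpace ℝ E] [CompleteSpace E]
    (hm : m0 ≤ mΩ) (X Y : Ω → E) (U c : ℝ) (hU : 0 ≤ U)
    (hX : StronglyMeasurable[m0] X) (hY : Integrable Y P) (hXb : ∀ᵐ ω ∂P, ‖X ω‖ ≤ U)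
    (hc : ∀ᵐ ω ∂P, ‖(P[Y | m0]) ω‖ ≤ c) :
    ∫ ω, inner ℝ (X ω) (Y ω) ∂P ≤ U * c := by
  have h : P[fun ω ↦ inner ℝ (X ω) (Y ω) | m0] =ᵐ[P] fun ω ↦ inner ℝ (X ω) (P[Y | m0] ω) :=
    condExp_stronglyMeasurable_bilin_of_bound (μ := P) (innerSL ℝ) hm hX hY U hXb
  rw [← integral_condExp hm, integral_congr_ae h]
  have : ∀ᵐ ω ∂P, ‖inner ℝ (X ω) ((P[Y | m0]) ω)‖ ≤ U * c := by
    filter_upwards [hXb, hc] with ω h1 h2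
    exact (norm_inner_le_norm _ _).trans (mul_le_mul h1 h2 (norm_nonneg _) hU)
  have := norm_integral_le_of_norm_le_const this
  simp only [probReal_univ, mul_one] at this
  exact (le_abs_self _).trans this

/-- Local noise reduction: for bounded, geometrically mixing ℝ^d-valued
random vectors, the L-step sum has second moment growing only linearly in L. -/
theorem local_noise_reduction
    {Ω : Type*} {mΩ : MeasurableSpace Ω} (P : Measure Ω) [IsProbabilityMeasure P]
    (d L : ℕ) (hL : 1 ≤ L)
    (G : Filtration ℕ mΩ)
    (X : ℕ → Ω → EuclideanSpace ℝ (Fin d))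
    (U : ℝ) (hU : 0 ≤ U)
    (hadapted : ∀ ℓ, ℓ < L → StronglyMeasurable[G ℓ] (X ℓ))
    (hbdd : ∀ ℓ, ℓ < L → ∀ᵐ ω ∂P, ‖X ℓ ω‖ ≤ U)
    (m ρ : ℝ) (hm : 0 < m) (hρ : ρ ∈ Set.Ioo (0 : ℝ) 1)
    (hmix : ∀ ℓ ℓ' : ℕ, ℓ < ℓ' → ℓ' < L →
      ∀ᵐ ω ∂P, ‖(P[X ℓ' | G ℓ]) ω‖ ≤ U * m * ρ ^ (ℓ' - ℓ)) :
    (∫ ω, ‖∑ ℓ ∈ Finset.range L, X ℓ ω‖ ^ 2 ∂P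
        ≤ U ^ 2 * (1 + 2 * m * ρ / (1 - ρ)) * L)
      ∧ (∫ ω, ‖∑ ℓ ∈ Finset.range L, X ℓ ω‖ ∂P
        ≤ (U + U * Real.sqrt (2 * m * ρ / (1 - ρ))) * Real.sqrt L) := by
  obtain ⟨h0, h1⟩ := hρ
  have h2 : 0 < 1 - ρ := by linarith
  have hκ : 0 ≤ 2 * m * ρ / (1 - ρ) := by positivity
  have hmem : ∀ l, l < L → MemLp (X l) 2 P := fun l hl =>
    MemLp.of_bound ((hadapted l hl).mono (G.le l)).aestronglyMeasurable U (hbdd l hl)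
  have hS : ∀ n, n ≤ L → MemLp (fun ω => ∑ l ∈ Finset.range n, X l ω) 2 P := fun n hn =>
    memLp_finsetSum _ fun l hl => hmem l (by have := Finset.mem_range.mp hl; omega)
  have key : ∀ n, n ≤ L → ∫ ω, ‖∑ ℓ ∈ Finset.range n, X ℓ ω‖ ^ 2 ∂P
        ≤ U ^ 2 * (1 + 2 * m * ρ / (1 - ρ)) * n := by
    intro n
    induction n with
    | zero => simp
    | succ n ih =>
      intro hn
      have hnL : n < L := hn
      have ih := ih hnL.le
      have i1 := (hS n hnL.le).integrable_norm_pow two_ne_zero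
      have i2 := (hmem n hnL).integrable_norm_pow two_ne_zero
      have i3 : ∀ l ∈ Finset.range n, Integrable (fun ω => inner ℝ (X l ω) (X n ω)) P :=
        fun l hl => by
          have hl := (Finset.mem_range.mp hl).trans hnL
          refine Integrable.of_bound ((hmem l hl).1.inner (hmem n hnL).1) (U * U) ?_
          filter_upwards [hbdd l hl, hbdd n hnL] with ω h1 h2
          exact (norm_inner_le_norm _ _).trans (mul_le_mul h1 h2 (norm_nonneg _) hU)
      have e : (fun ω => ‖∑ ℓ ∈ Finset.range (n + 1), X ℓ ω‖ ^ 2) = fun ω =>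
          ‖∑ ℓ ∈ Finset.range n, X ℓ ω‖ ^ 2 + 2 * ∑ l ∈ Finset.range n, inner ℝ (X l ω) (X n ω)
            + ‖X n ω‖ ^ 2 := by
        ext ω
        rw [Finset.sum_range_succ, norm_add_sq_real, sum_inner]
      have i4 := (integrable_finsetSum _ i3).const_mul 2
      have i5 : Integrable (fun ω => ‖∑ ℓ ∈ Finset.range n, X ℓ ω‖ ^ 2 +
          2 * ∑ l ∈ Finset.range n, inner ℝ (X l ω) (X n ω)) P := i1.add i4
      rw [e, integral_add i5 i2, integral_add i1 i4, integral_const_mul,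
        integral_finsetSum _ i3]
      have b2 : ∫ ω, ‖X n ω‖ ^ 2 ∂P ≤ U ^ 2 := by
        have : ∫ ω, ‖X n ω‖ ^ 2 ∂P ≤ ∫ ω, U ^ 2 ∂P := by
          refine integral_mono_ae i2 (integrable_const _) ?_
          filter_upwards [hbdd n hnL] with ω h
          exact pow_le_pow_left₀ (norm_nonneg _) h 2
        simpa using this
      have b3 : ∑ l ∈ Finset.range n, ∫ ω, inner ℝ (X l ω) (X n ω) ∂P
          ≤ U ^ 2 * m * (ρ / (1 - ρ)) := by
        calc _ ≤ ∑ l ∈ Finset.range n, U ^ 2 * m * ρ ^ (n - l) := by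
              refine Finset.sum_le_sum fun l hl => ?_
              have hl := Finset.mem_range.mp hl
              have := lnr_cov P (G.le l) (X l) (X n) U _ hU (hadapted l (hl.trans hnL))
                ((hmem n hnL).integrable one_le_two) (hbdd l (hl.trans hnL)) (hmix l n hl hnL)
              linarith
          _ ≤ _ := by
              rw [← Finset.mul_sum]
              exact mul_le_mul_of_nonneg_left (lnr_geom ρ h0 h1 n) (by positivity)
      have : U ^ 2 * (1 + 2 * m * ρ / (1 - ρ)) * ((n + 1 : ℕ) : ℝ)
          = U ^ 2 * (1 + 2 * m * ρ / (1 - ρ)) * n + 2 * (U ^ 2 * m * (ρ / (1 - ρ))) + U ^ 2 := by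
        push_cast; ring
      linarith
  have k := key L le_rfl
  refine ⟨k, ?_⟩
  have hv := ProbabilityTheory.variance_nonneg (fun ω => ‖∑ ℓ ∈ Finset.range L, X ℓ ω‖) P
  rw [ProbabilityTheory.variance_eq_sub (hS L le_rfl).norm] at hv
  simp only [Pi.pow_apply] at hv
  set κ := 2 * m * ρ / (1 - ρ)
  refine le_of_sq_le_sq ?_ (by positivity)
  have s1 : Real.sqrt κ ^ 2 = κ := Real.sq_sqrt hκ
  have s2 : Real.sqrt (L : ℝ) ^ 2 = L := Real.sq_sqrt (by positivity)
  have : ((U + U * Real.sqrt κ) * Real.sqrt L) ^ 2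
      = U ^ 2 * (1 + κ) * L + 2 * (U ^ 2 * Real.sqrt κ * L) := by
    rw [mul_pow, s2, ← s1, Real.sqrt_sq (Real.sqrt_nonneg _)]; ring
  have : 0 ≤ U ^ 2 * Real.sqrt κ * L := by positivity
  linarith
end
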